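/- For every integer n ≥ 2, the triple of rational numbers ((2n+1)/2, n+1, (2n+1)/(2n−1)) does not satisfy the Jankins–Neumann–Naimi condition: there do not exist relatively prime integers m and a with 0 < a < m, together with a permutation σ of {1, 2, 3}, such that t_{σ(1)} > m/a, t_{σ(2)} > m/(m−a), and t_{σ(3)} > m, where (t_1, t_2, t_3) = ((2n+1)/2, n+1, (2n+1)/(2n−1)). -/

import Mathlib

theorem watson_aux (n m a : ℤ) (hn : 2 ≤ n) (ha : 0 < a) (ham : a < m) (hm : m ≤ n)
    (h : (2 * (n : ℚ) + 1) / (2 * (n : ℚ) - 1) > (m : ℚ) / (a : ℚ)) : False := by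
  have hn' : (2 : ℚ) ≤ n := by exact_mod_cast hn
  have ha' : (0 : ℚ) < a := by exact_mod_cast ha
  rw [gt_iff_lt, div_lt_div_iff₀ ha' (by linarith)] at h
  have h' : m * (2 * n - 1) < (2 * n + 1) * a := by exact_mod_cast h
  nlinarith [mul_nonneg (show 0 ≤ m - a - 1 by omega) (show 0 ≤ 2 * n + 1 by omega)]

/-- For `n ≥ 2`, the triple `((2n+1)/2, n+1, (2n+1)/(2n-1))` does not satisfy the
Jankins–Neumann–Naimi condition: there are no relatively prime integers `0 < a < m`
and permutation `σ` of `{1,2,3}` with `t_{σ(1)} > m/a`, `t_{σ(2)} > m/(m-a)`,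
`t_{σ(3)} > m`. -/
theorem watson_family_no_horizontal_foliation (n : ℤ) (hn : 2 ≤ n)
    (t : Fin 3 → ℚ)
    (ht : t = ![(2 * (n : ℚ) + 1) / 2, (n : ℚ) + 1, (2 * (n : ℚ) + 1) / (2 * (n : ℚ) - 1)]) :
    ¬ ∃ (m a : ℤ) (σ : Equiv.Perm (Fin 3)),
        0 < a ∧ a < m ∧ IsCoprime m a ∧
        t (σ 0) > (m : ℚ) / (a : ℚ) ∧
        t (σ 1) > (m : ℚ) / ((m : ℚ) - (a : ℚ)) ∧
        t (σ 2) > (m : ℚ) := by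
  rintro ⟨m, a, σ, ha, ham, -, h0, h1, h2⟩
  have hn' : (2 : ℚ) ≤ n := by exact_mod_cast hn
  have hT : ¬ (2 * (n : ℚ) + 1) / (2 * (n : ℚ) - 1) > (m : ℚ) := by
    intro h
    have hm : (2 : ℚ) ≤ m := by exact_mod_cast (by omega : (2 : ℤ) ≤ m)
    rw [gt_iff_lt, lt_div_iff₀ (by linarith)] at h
    nlinarith
  have ne2 : σ 2 ≠ 2 := by
    intro h
    rw [h, ht] at h2
    exact hT (by simpa using h2)
  have hm : m ≤ n := by
    have : (m : ℚ) < n + 1 := by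
      generalize σ 2 = i at h2 ne2
      subst ht
      fin_cases i
      · simp at h2
        linarith
      · simpa using h2
      · exact absurd rfl ne2
    have : m < n + 1 := by exact_mod_cast this
    omega
  obtain ⟨i, hi⟩ := σ.surjective 2
  fin_cases i
  · simp only [Fin.zero_eta] at hi
    rw [hi, ht] at h0
    exact watson_aux n m a hn ha ham hm (by simpa using h0)
  · simp only [Fin.mk_one] at hi
    rw [hi, ht] at h1
    refine watson_aux n m (m - a) hn (by omega) (by omega) hm ?_
    push_cast
    simpa using h1
  · exact ne2 hi
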